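/- arXiv:2307.14546 — 11 statements merged into one kernel-verified Lean document; each statement's English description precedes it below -/
import Mathlib

section
/- For all complex numbers p, q, a, b and every natural number m, the integral ∫₀^{2π} exp((p + i·a)·cos x + (q + i·b)·sin x)·exp(−i·m·x) dx equals 2π·X^m·∑_{j=0}^∞ (X·Y)^j / (j!·(j+m)!), where X = ((p+b) + i·(a−q))/2 and Y = ((p−b) + i·(a+q))/2. -/
open scoped Real

lemma gh_exp_hasSum (z : ℂ) : HasSum (fun n : ℕ => z ^ n / (n.factorial : ℂ)) (Complex.exp z) := by
  rw [Complex.exp_eq_exp_ℂ]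
  exact NormedSpace.expSeries_div_hasSum_exp z

lemma gh_summ (z : ℂ) : Summable (fun n : ℕ => ‖z ^ n / (n.factorial : ℂ)‖) :=
  NormedSpace.norm_expSeries_div_summable z

lemma gh_prod (u v : ℂ) : HasSum (fun k : ℕ × ℕ => u ^ k.1 / (k.1.factorial : ℂ) *
    (v ^ k.2 / (k.2.factorial : ℂ))) (Complex.exp u * Complex.exp v) := by
  have hs : Summable (fun k : ℕ × ℕ => u ^ k.1 / (k.1.factorial : ℂ) *
    (v ^ k.2 / (k.2.factorial : ℂ))) :=
    summable_mul_of_summable_norm (f := fun n : ℕ => u ^ n / (n.factorial : ℂ))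
      (g := fun n : ℕ => v ^ n / (n.factorial : ℂ)) (gh_summ u) (gh_summ v)
  have h := tsum_mul_tsum_of_summable_norm (f := fun n : ℕ => u ^ n / (n.factorial : ℂ))
      (g := fun n : ℕ => v ^ n / (n.factorial : ℂ)) (gh_summ u) (gh_summ v)
  rw [(gh_exp_hasSum u).tsum_eq, (gh_exp_hasSum v).tsum_eq] at h
  rw [h]
  exact hs.hasSum

lemma gh_prod_summ (X Y : ℂ) : Summable (fun k : ℕ × ℕ => ‖X ^ k.1 / (k.1.factorial : ℂ) *
    (Y ^ k.2 / (k.2.factorial : ℂ))‖) :=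
  Summable.mul_norm (f := fun n : ℕ => X ^ n / (n.factorial : ℂ))
      (g := fun n : ℕ => Y ^ n / (n.factorial : ℂ)) (gh_summ X) (gh_summ Y)

lemma gh_integral (n : ℤ) :
    (∫ x : ℝ in (0:ℝ)..(2 * π), Complex.exp (Complex.I * n * x)) =
      if n = 0 then 2 * (π : ℂ) else 0 := by
  split_ifs with h
  · subst h; simp
  · rw [integral_exp_mul_complex (by simp [h])]
    have : Complex.I * n * ((2 * π : ℝ) : ℂ) = n * (2 * π * Complex.I) := by push_cast; ring
    rw [this, Complex.exp_int_mul_two_pi_mul_I]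
    simp

lemma gh_main (X Y : ℂ) (m : ℕ) :
    (∫ x : ℝ in (0:ℝ)..(2 * π),
        Complex.exp (X * Complex.exp (Complex.I * x) + Y * Complex.exp (-Complex.I * x)) *
          Complex.exp (-Complex.I * m * x)) =
      2 * (π : ℂ) * X ^ m * ∑' j : ℕ, (X * Y) ^ j / ((j.factorial : ℂ) * ((j + m).factorial : ℂ)) := by
  obtain ⟨c, hc⟩ : ∃ c : ℕ × ℕ → ℂ, ∀ k, c k =
      X ^ k.1 / (k.1.factorial : ℂ) * (Y ^ k.2 / (k.2.factorial : ℂ)) := ⟨_, fun _ => rfl⟩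
  obtain ⟨F, hF⟩ : ∃ F : ℕ × ℕ → ℝ → ℂ, ∀ k, F k = fun x : ℝ =>
    c k * Complex.exp (Complex.I * (((k.1 : ℤ) - k.2 - m : ℤ) : ℂ) * x) := ⟨_, fun _ => rfl⟩
  have hcs : Summable (fun k => ‖c k‖) := by
    simp only [hc]
    exact gh_prod_summ X Y
  have hE : ∀ (n : ℤ) (x : ℝ), ‖Complex.exp (Complex.I * (n : ℂ) * x)‖ = 1 := by
    intro n x
    rw [Complex.norm_exp]; simp
  have key := intervalIntegral.hasSum_integral_of_dominated_convergence (μ := MeasureTheory.volume)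
    (a := 0) (b := 2 * π) (F := F)
    (f := fun x : ℝ => Complex.exp (X * Complex.exp (Complex.I * x) + Y * Complex.exp (-Complex.I * x)) *
          Complex.exp (-Complex.I * m * x)) (fun k _ => ‖c k‖)
    (fun k => by
      apply Continuous.aestronglyMeasurable
      simp only [hF]; fun_prop)
    (fun k => by
      refine Filter.Eventually.of_forall fun x _ => ?_
      simp only [hF]
      rw [norm_mul, hE, mul_one])
    (Filter.Eventually.of_forall fun x _ => hcs)
    (by simp)
    (by
      refine Filter.Eventually.of_forall fun x _ => ?_
      obtain ⟨u, hu⟩ : ∃ u, u = X * Complex.exp (Complex.I * x) := ⟨_, rfl⟩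
      obtain ⟨v, hv⟩ : ∃ v, v = Y * Complex.exp (-Complex.I * x) := ⟨_, rfl⟩
      have := (gh_prod u v).mul_right (Complex.exp (-Complex.I * m * x))
      rw [Complex.exp_add, ← hu, ← hv]
      refine Eq.mp (congrArg (fun g : ℕ × ℕ → ℂ => HasSum g _) (funext fun k => Eq.symm ?_)) this
      have e : Complex.exp (Complex.I * (((k.1 : ℤ) - k.2 - m : ℤ) : ℂ) * x) =
          Complex.exp (Complex.I * x) ^ k.1 * Complex.exp (-Complex.I * x) ^ k.2 *
            Complex.exp (-Complex.I * m * x) := by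
        rw [← Complex.exp_nat_mul, ← Complex.exp_nat_mul, ← Complex.exp_add, ← Complex.exp_add]
        congr 1
        push_cast
        ring
      simp only [hF, hc, hu, hv]
      rw [e, mul_pow, mul_pow]
      ring)
  have hφ : Function.Injective (fun j : ℕ => ((j + m, j) : ℕ × ℕ)) := by
    intro i j h
    exact (Prod.mk.inj h).2
  have hI : ∀ k : ℕ × ℕ, (∫ x in (0:ℝ)..(2 * π), F k x) =
      c k * if ((k.1 : ℤ) - k.2 - m : ℤ) = 0 then 2 * (π : ℂ) else 0 := by
    intro k
    simp only [hF]
    rw [intervalIntegral.integral_const_mul, gh_integral]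
  simp only [hI] at key
  rw [← hφ.hasSum_iff] at key
  · rw [← key.tsum_eq, ← tsum_mul_left]
    congr 1
    funext j
    simp only [Function.comp, hc]
    rw [if_pos (by push_cast; ring), pow_add, mul_pow]
    field_simp
  · rintro ⟨k, j⟩ h
    rw [if_neg, mul_zero]
    intro h0
    apply h
    refine ⟨j, ?_⟩
    simp only [Prod.mk.injEq, and_true]
    simp only at h0
    omega

theorem grobner_hofreiter_contour_integral (p q a b : ℂ) (m : ℕ) :
    (∫ x : ℝ in (0:ℝ)..(2 * π),
        Complex.exp ((p + Complex.I * a) * Complex.cos x + (q + Complex.I * b) * Complex.sin x) *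
          Complex.exp (-Complex.I * m * x)) =
      2 * (π : ℂ) * (((p + b) + Complex.I * (a - q)) / 2) ^ m *
        ∑' j : ℕ,
          ((((p + b) + Complex.I * (a - q)) / 2) * (((p - b) + Complex.I * (a + q)) / 2)) ^ j /
            ((j.factorial : ℂ) * ((j + m).factorial : ℂ)) := by
  rw [← gh_main]
  congr 1
  funext x
  congr 2
  rw [Complex.cos, Complex.sin, mul_comm (x : ℂ) Complex.I,
    show -(x : ℂ) * Complex.I = -Complex.I * x by ring]
  linear_combination (Complex.exp (Complex.I * x) - Complex.exp (-Complex.I * x)) * b / 2 * (-Complex.I_sq)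
end

section
/- For all real numbers p, q, a, b and every natural number m, ∫₀^{2π} exp(p·cos x + q·sin x)·sin(a·cos x + b·sin x − m·x) dx = i·π·[ (A′ − i·B′)^m · S_m(C′ − i·D′) − (A′ + i·B′)^m · S_m(C′ + i·D′) ], where A′ = (p+b)/2, B′ = (a−q)/2, C′ = (p² + q² − a² − b²)/4, D′ = (a·p + b·q)/2, and S_m(z) = ∑_{k=0}^∞ z^k/(k!·(m+k)!). (In the degenerate case A′ = B′ = 0 and m = 0, the term (A′ ± i·B′)^m is the natural power 0^0 = 1.) -/
open scoped Real

/-- `S m z = ∑_{k=0}^∞ z^k / (k! (m+k)!)`, i.e. `₀F₁(; m+1; z) / m!`. -/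
noncomputable def S (m : ℕ) (z : ℂ) : ℂ :=
  ∑' k : ℕ, z ^ k / ((k.factorial : ℂ) * ((m + k).factorial : ℂ))

theorem aux_sum (w : ℂ) (e g : ℝ → ℂ) (he : Continuous e) (hg : Continuous g)
    (h1 : ∀ x, ‖e x‖ ≤ 1) (C : ℝ) (hC : ∀ x, ‖g x‖ ≤ C) :
    HasSum (fun k : ℕ => ∫ x : ℝ in (0:ℝ)..(2 * π), (w ^ k / (k.factorial : ℂ)) * (e x ^ k * g x))
      (∫ x : ℝ in (0:ℝ)..(2 * π), Complex.exp (w * e x) * g x) := by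
  have hC0 : 0 ≤ C := (norm_nonneg _).trans (hC 0)
  refine intervalIntegral.hasSum_integral_of_dominated_convergence
    (fun k _ => ‖w‖ ^ k / (k.factorial : ℝ) * C) ?_ ?_ ?_ ?_ ?_
  · intro k
    exact Continuous.aestronglyMeasurable (by fun_prop)
  · intro k
    refine Filter.Eventually.of_forall fun x _ => ?_
    rw [norm_mul, norm_div, norm_pow, norm_mul, norm_pow, Complex.norm_natCast]
    gcongr
    calc ‖e x‖ ^ k * ‖g x‖ ≤ 1 * C := by
          gcongr
          · exact pow_le_one₀ (norm_nonneg _) (h1 x)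
          · exact hC x
      _ = C := one_mul C
  · refine Filter.Eventually.of_forall fun x _ => ?_
    exact (Real.summable_pow_div_factorial _).mul_right C
  · exact intervalIntegrable_const
  · refine Filter.Eventually.of_forall fun x _ => ?_
    have := (NormedSpace.expSeries_div_hasSum_exp (w * e x)).mul_right (g x)
    rw [← Complex.exp_eq_exp_ℂ] at this
    have h2 : (fun k : ℕ => (w ^ k / (k.factorial : ℂ)) * (e x ^ k * g x)) =
        fun k : ℕ => (w * e x) ^ k / (k.factorial : ℂ) * g x := by
      funext k; rw [mul_pow]; ring
    rw [h2]; exact this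

theorem aux_orth (j n : ℕ) :
    (∫ x : ℝ in (0:ℝ)..(2 * π), Complex.exp (Complex.I * x) ^ j * Complex.exp (-(Complex.I * x)) ^ n)
      = if j = n then 2 * (π : ℂ) else 0 := by
  have : ∀ x : ℝ, Complex.exp (Complex.I * x) ^ j * Complex.exp (-(Complex.I * x)) ^ n
      = Complex.exp ((Complex.I * ((j : ℂ) - n)) * x) := by
    intro x
    rw [← Complex.exp_nat_mul, ← Complex.exp_nat_mul, ← Complex.exp_add]
    congr 1; ring
  simp_rw [this]
  split_ifs with h
  · subst h; simp
  · have hne : (Complex.I * ((j : ℂ) - n)) ≠ 0 :=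
      mul_ne_zero Complex.I_ne_zero (sub_ne_zero.2 (by exact_mod_cast h))
    rw [integral_exp_mul_complex hne]
    have : Complex.exp (Complex.I * ((j : ℂ) - n) * ((2 * π : ℝ) : ℂ)) = 1 := by
      rw [Complex.exp_eq_one_iff]
      refine ⟨(j : ℤ) - n, ?_⟩
      push_cast; ring
    rw [this]; simp

theorem norm_e (x : ℝ) : ‖Complex.exp (Complex.I * x)‖ = 1 := by
  rw [mul_comm]; exact Complex.norm_exp_ofReal_mul_I x

theorem norm_e' (x : ℝ) : ‖Complex.exp (-(Complex.I * x))‖ = 1 := by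
  have := Complex.norm_exp_ofReal_mul_I (-x)
  rw [← this]; congr 2; push_cast; ring

theorem aux_one (u : ℂ) (n : ℕ) :
    (∫ x : ℝ in (0:ℝ)..(2 * π), Complex.exp (u * Complex.exp (Complex.I * x)) *
        Complex.exp (-(Complex.I * x)) ^ n) = 2 * π * (u ^ n / (n.factorial : ℂ)) := by
  have h := aux_sum u (fun x => Complex.exp (Complex.I * x))
    (fun x => Complex.exp (-(Complex.I * x)) ^ n) (by fun_prop) (by fun_prop)
    (fun x => (norm_e x).le) 1 (fun x => by rw [norm_pow, norm_e', one_pow])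
  simp_rw [intervalIntegral.integral_const_mul, aux_orth] at h
  have h2 := hasSum_ite_eq n (2 * π * (u ^ n / (n.factorial : ℂ)))
  refine h.unique ?_
  convert h2 using 2 with k
  split_ifs with hk
  · subst hk; ring
  · simp

theorem aux_two (u v : ℂ) (m : ℕ) :
    (∫ x : ℝ in (0:ℝ)..(2 * π), Complex.exp (v * Complex.exp (-(Complex.I * x))) *
      (Complex.exp (u * Complex.exp (Complex.I * x)) *
        Complex.exp (-(Complex.I * x)) ^ m)) = 2 * π * (u ^ m * S m (u * v)) := by
  have h := aux_sum v (fun x => Complex.exp (-(Complex.I * x)))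
    (fun x => Complex.exp (u * Complex.exp (Complex.I * x)) *
        Complex.exp (-(Complex.I * x)) ^ m) (by fun_prop) (by fun_prop)
    (fun x => (norm_e' x).le) (Real.exp ‖u‖) (fun x => by
      rw [norm_mul, norm_pow, norm_e', one_pow, mul_one]
      refine (Complex.norm_exp_le_exp_norm _).trans ?_
      rw [norm_mul, norm_e, mul_one])
  rw [← h.tsum_eq, S, ← tsum_mul_left, ← tsum_mul_left]
  refine tsum_congr fun k => ?_
  rw [intervalIntegral.integral_const_mul]
  have : ∀ x : ℝ, Complex.exp (-(Complex.I * x)) ^ k *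
     (Complex.exp (u * Complex.exp (Complex.I * x)) * Complex.exp (-(Complex.I * x)) ^ m)
     = Complex.exp (u * Complex.exp (Complex.I * x)) * Complex.exp (-(Complex.I * x)) ^ (m + k) := by
    intro x; rw [pow_add]; ring
  simp_rw [this, aux_one]
  have h1 : (k.factorial : ℂ) ≠ 0 := by exact_mod_cast k.factorial_ne_zero
  have h2 : ((m + k).factorial : ℂ) ≠ 0 := by exact_mod_cast (m + k).factorial_ne_zero
  field_simp
  ring

/-- Pointwise form of one exponential. -/
theorem aux_exp (P Q : ℂ) (m : ℕ) (x : ℝ) :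
    Complex.exp (((P + Complex.I * Q) / 2) * Complex.exp (-(Complex.I * x))) *
      (Complex.exp (((P - Complex.I * Q) / 2) * Complex.exp (Complex.I * x)) *
        Complex.exp (-(Complex.I * x)) ^ m) =
    Complex.exp (P * Complex.cos x + Q * Complex.sin x - Complex.I * (m * x)) := by
  rw [← Complex.exp_nat_mul, ← Complex.exp_add, ← Complex.exp_add]
  congr 1
  have e1 : Complex.exp (Complex.I * x) = Complex.cos x + Complex.sin x * Complex.I := by
    rw [mul_comm, Complex.exp_mul_I]
  have e2 : Complex.exp (-(Complex.I * x)) = Complex.cos x - Complex.sin x * Complex.I := by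
    rw [show -(Complex.I * (x:ℂ)) = (-x : ℂ) * Complex.I by ring, Complex.exp_mul_I,
      Complex.cos_neg, Complex.sin_neg]; ring
  rw [e1, e2]
  linear_combination (-Q * Complex.sin x) * Complex.I_sq

theorem aux_conj (m : ℕ) (z : ℂ) : (starRingEnd ℂ) (S m z) = S m ((starRingEnd ℂ) z) := by
  rw [S, S, Complex.conj_tsum]
  refine tsum_congr fun k => ?_
  simp

theorem gr_3937_1_corrected (p q a b : ℝ) (m : ℕ) :
    ((∫ x : ℝ in (0:ℝ)..(2 * π),
        Real.exp (p * Real.cos x + q * Real.sin x) *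
          Real.sin (a * Real.cos x + b * Real.sin x - m * x)) : ℂ) =
      Complex.I * (π : ℂ) *
        ((((p + b) / 2 : ℂ) - Complex.I * ((a - q) / 2 : ℂ)) ^ m *
            S m (((p^2 + q^2 - a^2 - b^2) / 4 : ℂ) - Complex.I * ((a * p + b * q) / 2 : ℂ)) -
          (((p + b) / 2 : ℂ) + Complex.I * ((a - q) / 2 : ℂ)) ^ m *
            S m (((p^2 + q^2 - a^2 - b^2) / 4 : ℂ) + Complex.I * ((a * p + b * q) / 2 : ℂ))) := by
  set F : ℝ → ℂ := fun x => Complex.exp ((p + Complex.I * a) * Complex.cos x +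
    (q + Complex.I * b) * Complex.sin x - Complex.I * (m * x)) with hF
  have hFc : Continuous F := by fun_prop
  have hI : (∫ x : ℝ in (0:ℝ)..(2 * π), F x) =
      2 * π * ((((p + b) / 2 : ℂ) + Complex.I * ((a - q) / 2 : ℂ)) ^ m *
      S m (((p^2 + q^2 - a^2 - b^2) / 4 : ℂ) + Complex.I * ((a * p + b * q) / 2 : ℂ))) := by
    simp_rw [hF, ← aux_exp, aux_two]
    congr 3
    · linear_combination (-(b:ℂ) / 2) * Complex.I_sq
    · congr 1
      linear_combination ((a:ℂ)^2/4 - (q + Complex.I * b)^2/4 + (b:ℂ)^2/4) * Complex.I_sq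
  have hpt : ∀ x : ℝ, ((Real.exp (p * Real.cos x + q * Real.sin x) : ℂ) *
          (Real.sin (a * Real.cos x + b * Real.sin x - m * x) : ℂ)) =
      Complex.I / 2 * ((starRingEnd ℂ) (F x) - F x) := by
    intro x
    have h1 : F x = Complex.exp ((p * Real.cos x + q * Real.sin x : ℝ) : ℂ) *
       Complex.exp (((a * Real.cos x + b * Real.sin x - m * x : ℝ) : ℂ) * Complex.I) := by
      rw [← Complex.exp_add]; simp only [hF]; congr 1; push_cast; ring
    rw [h1, Complex.exp_mul_I, ← Complex.ofReal_exp, ← Complex.ofReal_cos, ← Complex.ofReal_sin]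
    simp only [map_mul, map_add, Complex.conj_ofReal, Complex.conj_I]
    linear_combination ((Real.exp (p * Real.cos x + q * Real.sin x) : ℂ) *
          (Real.sin (a * Real.cos x + b * Real.sin x - m * x) : ℂ)) * Complex.I_sq
  have hIc : (∫ x : ℝ in (0:ℝ)..(2 * π), (starRingEnd ℂ) (F x)) =
      2 * π * ((((p + b) / 2 : ℂ) - Complex.I * ((a - q) / 2 : ℂ)) ^ m *
      S m (((p^2 + q^2 - a^2 - b^2) / 4 : ℂ) - Complex.I * ((a * p + b * q) / 2 : ℂ))) := by
    have : (∫ x : ℝ in (0:ℝ)..(2 * π), (starRingEnd ℂ) (F x)) =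
        (starRingEnd ℂ) (∫ x : ℝ in (0:ℝ)..(2 * π), F x) := by
      simp only [intervalIntegral, integral_conj, map_sub]
    rw [this, hI]
    simp only [map_mul, map_pow, map_add, map_sub, map_div₀, aux_conj, Complex.conj_ofReal, Complex.conj_I, map_ofNat, neg_mul, ← sub_eq_add_neg]
  simp_rw [hpt]
  rw [intervalIntegral.integral_const_mul, intervalIntegral.integral_sub, hI, hIc]
  · ring
  · exact Continuous.intervalIntegrable (by fun_prop) _ _
  · exact hFc.intervalIntegrable _ _
end

section
/- For all real numbers p, q, a, b and every natural number m, ∫₀^{2π} exp(p·cos x + q·sin x)·cos(a·cos x + b·sin x − m·x) dx = π·[ (A′ − i·B′)^m · S_m(C′ − i·D′) + (A′ + i·B′)^m · S_m(C′ + i·D′) ], where A′ = (p+b)/2, B′ = (a−q)/2, C′ = (p² + q² − a² − b²)/4, D′ = (a·p + b·q)/2, and S_m(z) = ∑_{k=0}^∞ z^k/(k!·(m+k)!). (In the degenerate case A′ = B′ = 0 and m = 0, the term (A′ ± i·B′)^m is the natural power 0^0 = 1.) -/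
open scoped Real

lemma aux_int (n : ℤ) : ∫ x : ℝ in (0:ℝ)..(2 * π), Complex.exp (n * Complex.I * x) =
    if n = 0 then (2 * π : ℂ) else 0 := by
  split_ifs with h
  · subst h; simp
  · have hc : (n * Complex.I : ℂ) ≠ 0 := by simp [h]
    rw [integral_exp_mul_complex hc]
    have : (n * Complex.I * ((2 * π : ℝ) : ℂ) : ℂ) = n * (2 * π * Complex.I) := by
      push_cast; ring
    rw [this, Complex.exp_int_mul_two_pi_mul_I]
    simp

noncomputable def auxF (u v : ℂ) (s : ℤ) (m : ℕ) (jk : ℕ × ℕ) (x : ℝ) : ℂ :=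
    (u ^ jk.1 / (jk.1.factorial : ℂ)) * (v ^ jk.2 / (jk.2.factorial : ℂ)) *
      Complex.exp (((s * ((jk.1 : ℤ) - jk.2 - m) : ℤ) : ℂ) * Complex.I * x)

lemma aux_main (u v : ℂ) (s : ℤ) (hs : s ≠ 0) (m : ℕ) :
    ∫ x : ℝ in (0:ℝ)..(2 * π), Complex.exp (u * Complex.exp (s * Complex.I * x)
      + v * Complex.exp (-(s * Complex.I * x)) - m * (s * Complex.I * x)) =
    2 * π * (u ^ m * S m (u * v)) := by
  have hexp : ∀ z : ℂ, HasSum (fun n : ℕ => z ^ n / (n.factorial : ℂ)) (Complex.exp z) := by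
    intro z
    rw [Complex.exp_eq_exp_ℂ]
    exact NormedSpace.expSeries_div_hasSum_exp z
  have hsn : ∀ z : ℂ, Summable (fun n : ℕ => ‖z ^ n / (n.factorial : ℂ)‖) := by
    intro z
    simpa using Real.summable_pow_div_factorial ‖z‖
  have hb : ∀ (n : ℕ × ℕ) (x : ℝ), ‖auxF u v s m n x‖ ≤
      ‖u ^ n.1 / (n.1.factorial : ℂ)‖ * ‖v ^ n.2 / (n.2.factorial : ℂ)‖ := by
    intro n x
    have : Complex.exp (((s * ((n.1 : ℤ) - n.2 - m) : ℤ) : ℂ) * Complex.I * x)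
      = Complex.exp ((((s * ((n.1 : ℤ) - n.2 - m) : ℤ) * x : ℝ) : ℂ) * Complex.I) := by
      congr 1; push_cast; ring
    rw [auxF, norm_mul, norm_mul, this, Complex.norm_exp_ofReal_mul_I, mul_one]
  have hc : ∀ n : ℕ × ℕ, Continuous (auxF u v s m n) := by
    intro n
    unfold auxF
    fun_prop
  have hl : ∀ x : ℝ, HasSum (fun n => auxF u v s m n x)
      (Complex.exp (u * Complex.exp (s * Complex.I * x)
      + v * Complex.exp (-(s * Complex.I * x)) - m * (s * Complex.I * x))) := by
    intro x
    have h1 := hexp (u * Complex.exp (s * Complex.I * x))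
    have h2 := hexp (v * Complex.exp (-(s * Complex.I * x)))
    have h0 := summable_mul_of_summable_norm (hsn (u * Complex.exp (s * Complex.I * x)))
      (hsn (v * Complex.exp (-(s * Complex.I * x))))
    have h3 := (h1.mul h2 h0).mul_right
      (Complex.exp (-(m * (s * Complex.I * x))))
    rw [← Complex.exp_add, ← Complex.exp_add, ← sub_eq_add_neg] at h3
    have hfun : (fun n => auxF u v s m n x) = fun i : ℕ × ℕ =>
        (u * Complex.exp (s * Complex.I * x)) ^ i.1 / (i.1.factorial : ℂ) *
        ((v * Complex.exp (-(s * Complex.I * x))) ^ i.2 / (i.2.factorial : ℂ)) *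
        Complex.exp (-(m * (s * Complex.I * x))) := by
      funext ⟨j, k⟩
      simp only [auxF]
      rw [mul_pow, mul_pow, ← Complex.exp_nat_mul, ← Complex.exp_nat_mul]
      have : Complex.exp (((s * ((j : ℤ) - k - m) : ℤ) : ℂ) * Complex.I * x) =
        Complex.exp (j * (s * Complex.I * x)) * Complex.exp (k * -(s * Complex.I * x)) *
          Complex.exp (-(m * (s * Complex.I * x))) := by
        rw [← Complex.exp_add, ← Complex.exp_add]; congr 1; push_cast; ring
      rw [this]; ring
    rw [hfun]
    exact h3
  have hsum : Summable (fun n : ℕ × ℕ =>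
      ‖u ^ n.1 / (n.1.factorial : ℂ)‖ * ‖v ^ n.2 / (n.2.factorial : ℂ)‖) :=
    (hsn u).mul_of_nonneg (hsn v) (fun _ => norm_nonneg _) (fun _ => norm_nonneg _)
  have key := intervalIntegral.hasSum_integral_of_dominated_convergence
    (μ := MeasureTheory.volume) (a := 0) (b := 2 * π) (F := auxF u v s m)
    (f := fun x : ℝ => Complex.exp (u * Complex.exp (s * Complex.I * x)
      + v * Complex.exp (-(s * Complex.I * x)) - m * (s * Complex.I * x)))
    (fun n _ => ‖u ^ n.1 / (n.1.factorial : ℂ)‖ * ‖v ^ n.2 / (n.2.factorial : ℂ)‖)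
    (fun n => (hc n).aestronglyMeasurable)
    (fun n => Filter.Eventually.of_forall fun x _ => hb n x)
    (Filter.Eventually.of_forall fun x _ => hsum)
    intervalIntegrable_const
    (Filter.Eventually.of_forall fun x _ => hl x)
  have hF : ∀ jk : ℕ × ℕ, ∫ x in (0:ℝ)..(2 * π), auxF u v s m jk x =
      (u ^ jk.1 / (jk.1.factorial : ℂ)) * (v ^ jk.2 / (jk.2.factorial : ℂ)) *
      (if s * ((jk.1 : ℤ) - jk.2 - m) = 0 then (2 * π : ℂ) else 0) := by
    intro jk
    rw [← aux_int, ← intervalIntegral.integral_const_mul]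
    rfl
  simp only [hF] at key
  have hinj : Function.Injective (fun k : ℕ => ((m + k, k) : ℕ × ℕ)) := by
    intro a b h; simpa using h
  rw [← hinj.hasSum_iff] at key
  · rw [← key.tsum_eq, S, ← tsum_mul_left, ← tsum_mul_left]
    refine tsum_congr fun k => ?_
    simp only [Function.comp]
    rw [if_pos (by push_cast; ring)]
    have h1 : (k.factorial : ℂ) ≠ 0 := by exact_mod_cast k.factorial_ne_zero
    have h2 : ((m + k).factorial : ℂ) ≠ 0 := by exact_mod_cast (m + k).factorial_ne_zero
    field_simp
    ring
  · rintro ⟨j, k⟩ h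
    rw [if_neg, mul_zero]
    intro h0
    apply h
    have := (mul_eq_zero.1 h0).resolve_left hs
    refine ⟨k, ?_⟩
    simp only at this
    simp only [Prod.mk.injEq, and_true]
    omega

theorem gr_3937_2_corrected (p q a b : ℝ) (m : ℕ) :
    ((∫ x : ℝ in (0:ℝ)..(2 * π),
        Real.exp (p * Real.cos x + q * Real.sin x) *
          Real.cos (a * Real.cos x + b * Real.sin x - m * x)) : ℂ) =
      (π : ℂ) *
        ((((p + b) / 2 : ℂ) - Complex.I * ((a - q) / 2 : ℂ)) ^ m *
            S m (((p^2 + q^2 - a^2 - b^2) / 4 : ℂ) - Complex.I * ((a * p + b * q) / 2 : ℂ)) +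
          (((p + b) / 2 : ℂ) + Complex.I * ((a - q) / 2 : ℂ)) ^ m *
            S m (((p^2 + q^2 - a^2 - b^2) / 4 : ℂ) + Complex.I * ((a * p + b * q) / 2 : ℂ))) := by
  have e1 := aux_main (((p + b) / 2 : ℂ) + Complex.I * ((a - q) / 2 : ℂ))
    (((p - b) / 2 : ℂ) + Complex.I * ((a + q) / 2 : ℂ)) 1 one_ne_zero m
  have e2 := aux_main (((p + b) / 2 : ℂ) - Complex.I * ((a - q) / 2 : ℂ))
    (((p - b) / 2 : ℂ) - Complex.I * ((a + q) / 2 : ℂ)) (-1) (by norm_num) m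
  have m1 : (((p + b) / 2 : ℂ) + Complex.I * ((a - q) / 2 : ℂ)) *
    (((p - b) / 2 : ℂ) + Complex.I * ((a + q) / 2 : ℂ)) =
    ((p^2 + q^2 - a^2 - b^2) / 4 : ℂ) + Complex.I * ((a * p + b * q) / 2 : ℂ) := by
    linear_combination ((a^2 - q^2) / 4 : ℂ) * Complex.I_sq
  have m2 : (((p + b) / 2 : ℂ) - Complex.I * ((a - q) / 2 : ℂ)) *
    (((p - b) / 2 : ℂ) - Complex.I * ((a + q) / 2 : ℂ)) =
    ((p^2 + q^2 - a^2 - b^2) / 4 : ℂ) - Complex.I * ((a * p + b * q) / 2 : ℂ) := by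
    linear_combination ((a^2 - q^2) / 4 : ℂ) * Complex.I_sq
  rw [m1] at e1
  rw [m2] at e2
  have e3 := congrArg₂ (· + ·) e1 e2
  rw [← intervalIntegral.integral_add (Continuous.intervalIntegrable (by fun_prop) _ _)
    (Continuous.intervalIntegrable (by fun_prop) _ _)] at e3
  have e4 : ∀ t : ℂ, t = (1 / 2 : ℂ) * (2 * t) := fun t => by ring
  rw [e4 ((π : ℂ) * _)]
  have e5 : ∀ P X Y : ℂ, 2 * (P * (X + Y)) = 2 * P * Y + 2 * P * X := fun P X Y => by ring
  rw [e5, ← e3, ← intervalIntegral.integral_const_mul]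
  try rw [← intervalIntegral.integral_ofReal]
  refine intervalIntegral.integral_congr fun x _ => ?_
  push_cast
  have c1 : Complex.exp (1 * Complex.I * x) = Complex.cos x + Complex.sin x * Complex.I := by
    rw [one_mul, mul_comm, Complex.exp_mul_I]
  have c2 : Complex.exp (-(1 * Complex.I * x)) = Complex.cos x - Complex.sin x * Complex.I := by
    rw [one_mul, mul_comm, ← neg_mul, Complex.exp_mul_I, Complex.cos_neg, Complex.sin_neg]; ring
  have c3 : (-1 * Complex.I * x : ℂ) = -(1 * Complex.I * x) := by ring
  rw [c3, neg_neg, c1, c2, Complex.cos.eq_1 (_ - _)]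
  rw [mul_div_assoc', mul_add, ← Complex.exp_add, ← Complex.exp_add, div_eq_mul_inv, mul_comm,
    one_div]
  congr 2
  · congr 1
    linear_combination (-(a - q) / 2 + (a + q) / 2 : ℂ) * Complex.sin x * Complex.I_sq
  · congr 1
    linear_combination (-(a - q) / 2 + (a + q) / 2 : ℂ) * Complex.sin x * Complex.I_sq
end

section
/- Let z and w be nonzero complex numbers and let m be an odd natural number. If arg z + arg w lies in the interval (−π, π], then z^{m/2} · w^{m/2} = (z·w)^{m/2}; otherwise (i.e., if arg z + arg w > π or arg z + arg w ≤ −π), then z^{m/2} · w^{m/2} = −(z·w)^{m/2}. Here all powers are principal complex powers with exponent m/2. -/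
open scoped Real

theorem cpow_half_odd_mul_sign (z w : ℂ) (hz : z ≠ 0) (hw : w ≠ 0) (m : ℕ) (hm : Odd m) :
    (z.arg + w.arg ∈ Set.Ioc (-π) π →
        z ^ ((m : ℂ) / 2) * w ^ ((m : ℂ) / 2) = (z * w) ^ ((m : ℂ) / 2)) ∧
      (z.arg + w.arg ∉ Set.Ioc (-π) π →
        z ^ ((m : ℂ) / 2) * w ^ ((m : ℂ) / 2) = -((z * w) ^ ((m : ℂ) / 2))) := by
  have hzw := mul_ne_zero hz hw
  rw [Complex.cpow_def_of_ne_zero hz, Complex.cpow_def_of_ne_zero hw,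
    Complex.cpow_def_of_ne_zero hzw, ← Complex.exp_add, ← add_mul]
  constructor
  · intro h
    rw [(Complex.log_mul_eq_add_log_iff hz hw).2 h]
  · intro h
    have h1 : Complex.exp (Complex.log z + Complex.log w) = Complex.exp (Complex.log (z * w)) := by
      rw [Complex.exp_add, Complex.exp_log hz, Complex.exp_log hw, Complex.exp_log hzw]
    obtain ⟨n, hn⟩ := Complex.exp_eq_exp_iff_exists_int.1 h1
    have him : z.arg + w.arg = (z * w).arg + n * (2 * π) := by
      have := congrArg Complex.im hn
      simpa [Complex.log_im] using this
    have hpi := Real.pi_pos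
    obtain ⟨a1, a2⟩ := z.arg_mem_Ioc
    obtain ⟨b1, b2⟩ := w.arg_mem_Ioc
    obtain ⟨c1, c2⟩ := (z * w).arg_mem_Ioc
    have n0 : n ≠ 0 := by
      rintro rfl
      apply h
      rw [him]
      simpa using (z * w).arg_mem_Ioc
    have u : n < 2 := by
      by_contra! hh
      have : (2 : ℝ) ≤ n := by exact_mod_cast hh
      nlinarith
    have l : -2 < n := by
      by_contra! hh
      have : (n : ℝ) ≤ -2 := by exact_mod_cast hh
      nlinarith
    have key : Complex.exp (n * (m * (π * Complex.I))) = -1 := by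
      have e : Complex.exp (m * (π * Complex.I)) = -1 := by
        rw [Complex.exp_nat_mul, Complex.exp_pi_mul_I, hm.neg_one_pow]
      rw [Complex.exp_int_mul, e]
      have : n = 1 ∨ n = -1 := by omega
      rcases this with rfl | rfl <;> norm_num
    rw [hn, show (Complex.log (z * w) + n * (2 * π * Complex.I)) * ((m : ℂ) / 2)
      = Complex.log (z * w) * ((m : ℂ) / 2) + n * (m * (π * Complex.I)) by ring,
      Complex.exp_add, key]
    ring
end

section
/- Let p, q, a, b be real numbers and set X = ((p+b) + i·(a−q))/2 and Y = ((p−b) + i·(a+q))/2, and suppose Y ≠ 0. Then arg X + arg(conj Y) does not lie in (−π, π] if and only if one of the following holds: (1) [ |q| > |a|, or (q = −|a| and q ≠ 0) ] and p < −b·a/q; (2) q > |a| and p = −b·a/q; (3) q = 0 and a = 0 and p < −|b|. -/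
open scoped Real ComplexConjugate

lemma aux_im (z w : ℂ) : z.re * w.im + z.im * w.re = ‖z‖ * ‖w‖ * Real.sin (z.arg + w.arg) := by
  rw [Real.sin_add]
  have h1 := Complex.norm_mul_cos_arg z
  have h2 := Complex.norm_mul_sin_arg z
  have h3 := Complex.norm_mul_cos_arg w
  have h4 := Complex.norm_mul_sin_arg w
  rw [← h1, ← h2, ← h3, ← h4]
  simp only [Complex.norm_mul_cos_arg, Complex.norm_mul_sin_arg]
  linear_combination (-(‖w‖ * Real.sin w.arg)) * h1 - z.re * h4 - (‖w‖ * Real.cos w.arg) * h2 - z.im * h3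

lemma aux_arg (z w : ℂ) : (z.arg + w.arg ∉ Set.Ioc (-π) π) ↔
    ((z.im < 0 ∧ w.im < 0 ∧ 0 ≤ z.re * w.im + z.im * w.re) ∨
     (0 < z.im ∧ 0 < w.im ∧ z.re * w.im + z.im * w.re < 0) ∨
     (z.im = 0 ∧ z.re < 0 ∧ 0 < w.im) ∨ (w.im = 0 ∧ w.re < 0 ∧ 0 < z.im) ∨
     (z.im = 0 ∧ w.im = 0 ∧ z.re < 0 ∧ w.re < 0)) := by
  have hpi := Real.pi_pos
  have key := aux_im z w
  have cls : ∀ u : ℂ, (u.im < 0 ∧ -π < u.arg ∧ u.arg < 0 ∧ 0 < ‖u‖) ∨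
      (0 < u.im ∧ 0 < u.arg ∧ u.arg < π ∧ 0 < ‖u‖) ∨ (u.im = 0 ∧ u.re < 0 ∧ u.arg = π) ∨
      (u.im = 0 ∧ 0 ≤ u.re ∧ u.arg = 0) := by
    intro u
    rcases lt_trichotomy u.im 0 with h | h | h
    · left
      refine ⟨h, Complex.neg_pi_lt_arg u, Complex.arg_neg_iff.2 h, norm_pos_iff.2 ?_⟩
      rintro rfl; simp at h
    · right; right
      rcases lt_or_ge u.re 0 with h' | h'
      · left; exact ⟨h, h', Complex.arg_eq_pi_iff.2 ⟨h', h⟩⟩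
      · right; exact ⟨h, h', Complex.arg_eq_zero_iff.2 ⟨h', h⟩⟩
    · right; left
      have h0 : u.arg ≠ 0 := fun e => h.ne' (Complex.arg_eq_zero_iff.1 e).2
      have h1 : u.arg ≠ π := fun e => h.ne' (Complex.arg_eq_pi_iff.1 e).2
      refine ⟨h, lt_of_le_of_ne (Complex.arg_nonneg_iff.2 h.le) h0.symm,
        lt_of_le_of_ne (Complex.arg_le_pi u) h1, norm_pos_iff.2 ?_⟩
      rintro rfl; simp at h
  rw [Set.mem_Ioc]
  rcases cls z with ⟨a1, a2, a3, a4⟩ | ⟨a1, a2, a3, a4⟩ | ⟨a1, a2, a3⟩ | ⟨a1, a2, a3⟩ <;>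
  rcases cls w with ⟨b1, b2, b3, b4⟩ | ⟨b1, b2, b3, b4⟩ | ⟨b1, b2, b3⟩ | ⟨b1, b2, b3⟩
  · have hn := mul_pos a4 b4
    constructor
    · intro h
      left
      refine ⟨a1, b1, ?_⟩
      rw [key]
      have hle : z.arg + w.arg ≤ -π := by
        by_contra hc; exact h ⟨by linarith, by linarith⟩
      have := Real.sin_nonneg_of_nonneg_of_le_pi (x := z.arg + w.arg + 2 * π)
        (by linarith) (by linarith)
      rw [Real.sin_add_two_pi] at this
      positivity
    · rintro (⟨-, -, h⟩ | h | h | h | h)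
      · rintro ⟨h1, -⟩
        have := Real.sin_neg_of_neg_of_neg_pi_lt (x := z.arg + w.arg) (by linarith) h1
        have := mul_neg_of_pos_of_neg hn this
        linarith
      all_goals (exfalso; obtain ⟨h1, h2, h3⟩ := h; first | linarith | (obtain ⟨h3, h4⟩ := h3; linarith))
  · constructor
    · intro h; exact absurd ⟨by linarith, by linarith⟩ h
    · rintro (⟨h, h', h''⟩ | ⟨h, h', h''⟩ | ⟨h, h', h''⟩ | ⟨h, h', h''⟩ | ⟨h, h', h''⟩) <;> exfalso <;> linarith
  · constructor
    · intro h; exact absurd ⟨by linarith, by linarith⟩ h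
    · rintro (⟨h, h', h''⟩ | ⟨h, h', h''⟩ | ⟨h, h', h''⟩ | ⟨h, h', h''⟩ | ⟨h, h', h''⟩) <;> exfalso <;> linarith
  · constructor
    · intro h; exact absurd ⟨by linarith, by linarith⟩ h
    · rintro (⟨h, h', h''⟩ | ⟨h, h', h''⟩ | ⟨h, h', h''⟩ | ⟨h, h', h''⟩ | ⟨h, h', h''⟩) <;> exfalso <;> linarith
  · constructor
    · intro h; exact absurd ⟨by linarith, by linarith⟩ h
    · rintro (⟨h, h', h''⟩ | ⟨h, h', h''⟩ | ⟨h, h', h''⟩ | ⟨h, h', h''⟩ | ⟨h, h', h''⟩) <;> exfalso <;> linarith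
  · have hn := mul_pos a4 b4
    constructor
    · intro h
      right; left
      refine ⟨a1, b1, ?_⟩
      rw [key]
      have hle : π < z.arg + w.arg := by
        by_contra hc; exact h ⟨by linarith, by linarith⟩
      have := Real.sin_neg_of_neg_of_neg_pi_lt (x := z.arg + w.arg - 2 * π)
        (by linarith) (by linarith)
      rw [Real.sin_sub_two_pi] at this
      exact mul_neg_of_pos_of_neg hn this
    · rintro (⟨h, h', h''⟩ | ⟨-, -, h⟩ | ⟨h, h', h''⟩ | ⟨h, h', h''⟩ | ⟨h, h', h''⟩)
      · linarith
      · rintro ⟨-, h1⟩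
        have := Real.sin_nonneg_of_nonneg_of_le_pi (x := z.arg + w.arg) (by linarith) h1
        have := mul_nonneg hn.le this
        linarith
      all_goals linarith
  · exact iff_of_true (fun h => by linarith [h.2]) (by tauto)
  · constructor
    · intro h; exact absurd ⟨by linarith, by linarith⟩ h
    · rintro (⟨h, h', h''⟩ | ⟨h, h', h''⟩ | ⟨h, h', h''⟩ | ⟨h, h', h''⟩ | ⟨h, h', h''⟩) <;> exfalso <;> linarith
  · constructor
    · intro h; exact absurd ⟨by linarith, by linarith⟩ h
    · rintro (⟨h, h', h''⟩ | ⟨h, h', h''⟩ | ⟨h, h', h''⟩ | ⟨h, h', h''⟩ | ⟨h, h', h''⟩) <;> exfalso <;> linarith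
  · exact iff_of_true (fun h => by linarith [h.2]) (by tauto)
  · exact iff_of_true (fun h => by linarith [h.2]) (by tauto)
  all_goals
    constructor
    · intro h; exact absurd ⟨by linarith, by linarith⟩ h
    · rintro (⟨h, h', h''⟩ | ⟨h, h', h''⟩ | ⟨h, h', h''⟩ | ⟨h, h', h''⟩ | ⟨h, h', h'', h3⟩) <;> exfalso <;> linarith

theorem case1_sign_flip_conditions (p q a b : ℝ)
    (hY : (((p : ℂ) - b + Complex.I * (a + q)) / 2) ≠ 0) :
    ((((p : ℂ) + b + Complex.I * (a - q)) / 2).arg +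
        (conj ((((p : ℂ) - b + Complex.I * (a + q)) / 2))).arg ∉ Set.Ioc (-π) π) ↔
      (((|q| > |a| ∨ (q = -|a| ∧ q ≠ 0)) ∧ p < -(b * a / q)) ∨
        (q > |a| ∧ p = -(b * a / q)) ∨
        (q = 0 ∧ a = 0 ∧ p < -|b|)) := by
  have e1 : ((p : ℂ) + b + Complex.I * (a - q)) / 2 = ⟨(p + b) / 2, (a - q) / 2⟩ := by
    apply Complex.ext <;> simp
  have e2 : conj (((p : ℂ) - b + Complex.I * (a + q)) / 2) = ⟨(p - b) / 2, -(a + q) / 2⟩ := by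
    have e : ((p : ℂ) - b + Complex.I * (a + q)) / 2 = ⟨(p - b) / 2, (a + q) / 2⟩ := by
      apply Complex.ext <;> simp
    rw [e]
    apply Complex.ext
    · rw [Complex.conj_re]
    · rw [Complex.conj_im]; exact (neg_div _ _).symm
  rw [e1, e2, aux_arg]
  dsimp only
  have him : (p + b) / 2 * (-(a + q) / 2) + (a - q) / 2 * ((p - b) / 2) = -(p * q + b * a) / 2 := by
    ring
  rw [him]
  clear e1 e2 him hY
  rcases lt_trichotomy q 0 with hq | hq | hq
  · have d1 : p < -(b * a / q) ↔ 0 < p * q + b * a := by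
      rw [← neg_div, lt_div_iff_of_neg hq]; constructor <;> intro h <;> linarith
    have hnq : ¬ q > |a| := fun h => by linarith [abs_nonneg a]
    rw [d1, abs_of_neg hq]
    have hne := hq.ne
    constructor
    · rintro (⟨h, h', h''⟩ | ⟨h, h', h''⟩ | ⟨h, h', h''⟩ | ⟨h, h', h''⟩ | ⟨h, h', h'', h3⟩)
      · linarith
      · left
        exact ⟨Or.inl (abs_lt.2 ⟨by linarith, by linarith⟩), by linarith⟩
      · left
        have : a = q := by linarith
        subst this
        refine ⟨Or.inr ⟨by rw [abs_of_neg hq]; ring, hne⟩, by nlinarith⟩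
      · left
        have : a = -q := by linarith
        subst this
        refine ⟨Or.inr ⟨by rw [abs_neg, abs_of_neg hq]; ring, hne⟩, by nlinarith⟩
      · linarith
    · rintro (⟨h | ⟨h, -⟩, h'⟩ | h | h)
      · have := abs_lt.1 h
        right; left
        exact ⟨by linarith, by linarith, by linarith⟩
      · rcases abs_choice a with h1 | h1
        · have : a = -q := by linarith
          subst this
          right; right; right; left
          refine ⟨by ring, ?_, by linarith⟩
          by_contra hc
          nlinarith
        · have : a = q := by linarith
          subst this
          right; right; left
          refine ⟨by ring, ?_, by linarith⟩
          by_contra hc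
          nlinarith
      · exact absurd h.1 hnq
      · exact absurd h.1 hne
  · subst hq
    have h1 : ¬ |(0:ℝ)| > |a| := by simp
    have h2 : ¬ (0:ℝ) > |a| := by simp
    constructor
    · rintro (⟨h, h', h''⟩ | ⟨h, h', h''⟩ | ⟨h, h', h''⟩ | ⟨h, h', h''⟩ | ⟨h, h', h'', h3⟩)
      any_goals linarith
      right; right
      refine ⟨rfl, by linarith, ?_⟩
      rcases abs_choice b with hb | hb <;> rw [hb] <;> linarith
    · rintro (⟨h | h, h'⟩ | h | ⟨-, h, h'⟩)
      · exact absurd h h1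
      · exact absurd rfl h.2
      · exact absurd h.1 h2
      · right; right; right; right
        subst h
        refine ⟨by simp, by simp, ?_, ?_⟩ <;> linarith [le_abs_self b, neg_abs_le b]
  · have d1 : p < -(b * a / q) ↔ p * q + b * a < 0 := by
      rw [← neg_div, lt_div_iff₀ hq]; constructor <;> intro h <;> linarith
    have d2 : p = -(b * a / q) ↔ p * q + b * a = 0 := by
      rw [← neg_div, eq_div_iff hq.ne']; constructor <;> intro h <;> linarith
    rw [d1, d2, abs_of_pos hq]
    constructor
    · rintro (⟨h, h', h''⟩ | ⟨h, h', h''⟩ | ⟨h, h', h''⟩ | ⟨h, h', h''⟩ | ⟨h, h', h'', h3⟩)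
      any_goals linarith
      have hqa : q > |a| := abs_lt.2 ⟨by linarith, by linarith⟩
      rcases lt_or_eq_of_le (show p * q + b * a ≤ 0 by linarith) with h4 | h4
      · exact Or.inl ⟨Or.inl hqa, h4⟩
      · exact Or.inr (Or.inl ⟨hqa, h4⟩)
    · rintro (⟨h | h, h'⟩ | ⟨h, h'⟩ | ⟨h, h'⟩)
      · have := abs_lt.1 h
        left; exact ⟨by linarith, by linarith, by linarith⟩
      · linarith [h.1, abs_nonneg a]
      · have := abs_lt.1 h
        left; exact ⟨by linarith, by linarith, by linarith⟩
      · linarith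
end

section
/- Let p, q, a, b be real numbers and set X = ((p+b) + i·(a−q))/2 and Y = ((p−b) + i·(a+q))/2, and suppose Y ≠ 0. Then arg X + arg Y does not lie in (−π, π] if and only if one of the following holds: (1) [ |a| > |q|, or (a = |q| and a ≠ 0) ] and p < −b·q/a; (2) a < −|q| and p = −b·q/a; (3) a = 0 and q = 0 and p < −|b|. -/
open scoped Real

lemma aux_pos (z : ℂ) (h : 0 < z.im) : 0 < z.arg ∧ z.arg < π := by
  have h1 := Complex.arg_nonneg_iff.2 h.le
  refine ⟨lt_of_le_of_ne h1 fun h0 => ?_, ?_⟩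
  · have := (Complex.arg_eq_zero_iff.1 h0.symm).2
    linarith
  · exact Complex.arg_lt_pi_iff.2 (Or.inr h.ne')

lemma aux_neg (z : ℂ) (h : z.im < 0) : -π < z.arg ∧ z.arg < 0 :=
  ⟨(Complex.arg_mem_Ioc z).1, Complex.arg_neg_iff.2 h⟩

lemma aux_zero (z : ℂ) (h : z.im = 0) : (z.re < 0 ∧ z.arg = π) ∨ (0 ≤ z.re ∧ z.arg = 0) := by
  rcases lt_or_ge z.re 0 with h1 | h1
  · exact Or.inl ⟨h1, Complex.arg_eq_pi_iff.2 ⟨h1, h⟩⟩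
  · exact Or.inr ⟨h1, Complex.arg_eq_zero_iff.2 ⟨h1, h⟩⟩

lemma aux_sin (z w : ℂ) : (‖z‖ * ‖w‖) * Real.sin (z.arg + w.arg) = z.re * w.im + z.im * w.re := by
  rw [Real.sin_add, ← Complex.norm_mul_cos_arg z, ← Complex.norm_mul_sin_arg w,
    ← Complex.norm_mul_sin_arg z, ← Complex.norm_mul_cos_arg w]
  simp only [Complex.norm_mul_cos_arg, Complex.norm_mul_sin_arg]
  have h1 := Complex.norm_mul_cos_arg z
  have h2 := Complex.norm_mul_sin_arg z
  have h3 := Complex.norm_mul_cos_arg w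
  have h4 := Complex.norm_mul_sin_arg w
  rw [← h1, ← h2, ← h3, ← h4]
  ring

lemma aux_norm (z : ℂ) (h : z.im ≠ 0) : 0 < ‖z‖ := by
  rw [norm_pos_iff]
  rintro rfl
  simp at h

lemma aux_pp (z w : ℂ) (hz : 0 < z.im) (hw : 0 < w.im) :
    z.arg + w.arg ∉ Set.Ioc (-π) π ↔ z.re * w.im + z.im * w.re < 0 := by
  have hs := aux_sin z w
  have hn := mul_pos (aux_norm z hz.ne') (aux_norm w hw.ne')
  obtain ⟨h1, h2⟩ := aux_pos z hz
  obtain ⟨h3, h4⟩ := aux_pos w hw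
  rw [← hs, Set.mem_Ioc]
  constructor
  · intro h
    have h5 : π < z.arg + w.arg := by
      by_contra h6
      exact h ⟨by linarith, by linarith⟩
    have h7 : 0 < Real.sin (z.arg + w.arg - π) :=
      Real.sin_pos_of_pos_of_lt_pi (by linarith) (by linarith)
    rw [Real.sin_sub_pi] at h7
    exact mul_neg_of_pos_of_neg hn (by linarith)
  · rintro h ⟨_, h6⟩
    have := Real.sin_nonneg_of_nonneg_of_le_pi (by linarith : 0 ≤ z.arg + w.arg) h6
    have := mul_nonneg hn.le this
    linarith

lemma aux_nn (z w : ℂ) (hz : z.im < 0) (hw : w.im < 0) :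
    z.arg + w.arg ∉ Set.Ioc (-π) π ↔ 0 ≤ z.re * w.im + z.im * w.re := by
  have hs := aux_sin z w
  have hn := mul_pos (aux_norm z hz.ne) (aux_norm w hw.ne)
  obtain ⟨h1, h2⟩ := aux_neg z hz
  obtain ⟨h3, h4⟩ := aux_neg w hw
  rw [← hs, Set.mem_Ioc]
  constructor
  · intro h
    have h5 : z.arg + w.arg ≤ -π := by
      by_contra h6
      exact h ⟨by linarith, by linarith⟩
    have h7 : Real.sin (z.arg + w.arg + π) ≤ 0 :=
      Real.sin_nonpos_of_nonpos_of_neg_pi_le (by linarith) (by linarith)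
    rw [Real.sin_add_pi] at h7
    exact mul_nonneg hn.le (by linarith)
  · rintro h ⟨h5, h6⟩
    have := Real.sin_neg_of_neg_of_neg_pi_lt (by linarith : z.arg + w.arg < 0) h5
    have := mul_neg_of_pos_of_neg hn this
    linarith

theorem case2_sign_flip_conditions (p q a b : ℝ)
    (hY : (((p : ℂ) - b + Complex.I * (a + q)) / 2) ≠ 0) :
    ((((p : ℂ) + b + Complex.I * (a - q)) / 2).arg +
        ((((p : ℂ) - b + Complex.I * (a + q)) / 2)).arg ∉ Set.Ioc (-π) π) ↔
      (((|a| > |q| ∨ (a = |q| ∧ a ≠ 0)) ∧ p < -(b * q / a)) ∨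
        (a < -|q| ∧ p = -(b * q / a)) ∨
        (a = 0 ∧ q = 0 ∧ p < -|b|)) := by
  clear hY
  have e1 : ((p : ℂ) + b + Complex.I * (a - q)) / 2 = ⟨(p + b) / 2, (a - q) / 2⟩ := by
    apply Complex.ext <;> simp
  have e2 : ((p : ℂ) - b + Complex.I * (a + q)) / 2 = ⟨(p - b) / 2, (a + q) / 2⟩ := by
    apply Complex.ext <;> simp
  rw [e1, e2]
  set z : ℂ := ⟨(p + b) / 2, (a - q) / 2⟩ with hz
  set w : ℂ := ⟨(p - b) / 2, (a + q) / 2⟩ with hw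
  have zr : z.re = (p + b) / 2 := rfl
  have zi : z.im = (a - q) / 2 := rfl
  have wr : w.re = (p - b) / 2 := rfl
  have wi : w.im = (a + q) / 2 := rfl
  clear_value z w
  have hpi := Real.pi_pos
  have him : z.re * w.im + z.im * w.re = (p * a + b * q) / 2 := by
    rw [zr, zi, wr, wi]; ring
  -- mixed-type right-hand side is false
  have key : ∀ P : Prop, (|q| ≥ |a|) → (a = |q| → a = 0) → (a = 0 → q = 0 → -|b| ≤ p) → ¬ P →
      (P ↔ (((|a| > |q| ∨ (a = |q| ∧ a ≠ 0)) ∧ p < -(b * q / a)) ∨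
        (a < -|q| ∧ p = -(b * q / a)) ∨ (a = 0 ∧ q = 0 ∧ p < -|b|))) := by
    intro P h1 h2 h3 h4
    refine iff_of_false h4 ?_
    rintro (⟨h | ⟨h, h'⟩, _⟩ | ⟨h, _⟩ | ⟨h, h', h''⟩)
    · linarith
    · exact h' (h2 h)
    · have := neg_abs_le a
      linarith
    · linarith [h3 h h']
  rcases lt_trichotomy z.im 0 with hzi | hzi | hzi <;>
    rcases lt_trichotomy w.im 0 with hwi | hwi | hwi
  · rw [aux_nn z w hzi hwi, him]
    have hq : a < -|q| := by
      rw [lt_neg, abs_lt]; constructor <;> linarith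
    have hq0 := abs_nonneg q
    have ha : a < 0 := by linarith
    have h1 : |a| > |q| := by rw [abs_of_neg ha]; linarith
    have h2 : 0 ≤ (p * a + b * q) / 2 ↔ p ≤ -(b * q / a) := by
      rw [← neg_div, le_div_iff_of_neg ha]
      constructor <;> intro h <;> linarith
    rw [h2, le_iff_lt_or_eq]
    simp [h1, hq, ha.ne]
  · have hq : a = -q := by linarith
    have hq0 : 0 < q := by linarith
    apply key
    · rw [hq, abs_neg]
    · rw [abs_of_pos hq0]; intro; linarith
    · intros; linarith
    · obtain ⟨h1, h2⟩ := aux_neg z hzi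
      rw [not_not]
      rcases aux_zero w hwi with ⟨_, h⟩ | ⟨_, h⟩ <;> rw [h] <;> constructor <;> linarith
  · have hq0 : 0 < q := by linarith
    apply key
    · rw [abs_of_pos hq0, ge_iff_le, abs_le]; constructor <;> linarith
    · rw [abs_of_pos hq0]; intro; linarith
    · intros; linarith
    · obtain ⟨h1, h2⟩ := aux_neg z hzi
      obtain ⟨h3, h4⟩ := aux_pos w hwi
      rw [not_not]; constructor <;> linarith
  · have hq : a = q := by linarith
    have hq0 : q < 0 := by linarith
    apply key
    · rw [hq]
    · rw [abs_of_neg hq0]; intro; linarith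
    · intros; linarith
    · obtain ⟨h1, h2⟩ := aux_neg w hwi
      rw [not_not]
      rcases aux_zero z hzi with ⟨_, h⟩ | ⟨_, h⟩ <;> rw [h] <;> constructor <;> linarith
  · have ha : a = 0 := by linarith
    have hq : q = 0 := by linarith
    subst ha hq
    simp only [Set.mem_Ioc]
    have h5 : p < -|b| ↔ z.re < 0 ∧ w.re < 0 := by
      rw [lt_neg, abs_lt, zr, wr]
      constructor <;> rintro ⟨_, _⟩ <;> constructor <;> linarith
    simp only [h5, abs_zero, neg_zero, lt_irrefl, gt_iff_lt, ne_eq, not_true_eq_false, and_false,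
      false_and, or_self, false_or, true_and]
    rcases aux_zero z hzi with ⟨h, h'⟩ | ⟨h, h'⟩ <;>
      rcases aux_zero w hwi with ⟨k, k'⟩ | ⟨k, k'⟩ <;> rw [h', k']
    · exact iff_of_true (fun h => by linarith [h.2]) ⟨h, k⟩
    · exact iff_of_false (fun h => h ⟨by linarith, by linarith⟩) (fun h => by linarith [h.2])
    · exact iff_of_false (fun h => h ⟨by linarith, by linarith⟩) (fun h => by linarith [h.1])
    · exact iff_of_false (fun h => h ⟨by linarith, by linarith⟩) (fun h => by linarith [h.1])
  · have hq : a = q := by linarith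
    have hq0 : 0 < q := by linarith
    subst hq
    have e : b * a / a = b := by field_simp
    have hr : z.re < 0 ↔ p < -b := by
      rw [zr]; constructor <;> intro <;> linarith
    have hn : ¬ a < -a := by linarith
    simp only [e, abs_of_pos hq0, hq0.ne', ← hr, hn]
    obtain ⟨h1, h2⟩ := aux_pos w hwi
    rcases aux_zero z hzi with ⟨h, h'⟩ | ⟨h, h'⟩ <;> rw [h', Set.mem_Ioc]
    · exact iff_of_true (fun h => by linarith [h.2]) (by simp [h, hq0.ne'])
    · exact iff_of_false (fun h => h ⟨by linarith, by linarith⟩) (by simp [h, hq0.ne'])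
  · have hq0 : q < 0 := by linarith
    apply key
    · rw [abs_of_neg hq0, ge_iff_le, abs_le]; constructor <;> linarith
    · rw [abs_of_neg hq0]; intro; linarith
    · intros; linarith
    · obtain ⟨h1, h2⟩ := aux_pos z hzi
      obtain ⟨h3, h4⟩ := aux_neg w hwi
      rw [not_not]; constructor <;> linarith
  · have hq : q = -a := by linarith
    have hq0 : 0 < a := by linarith
    subst hq
    have e : b * -a / a = -b := by field_simp
    have hr : w.re < 0 ↔ p < - -b := by
      rw [wr]; constructor <;> intro <;> linarith
    have hn : ¬ a < -a := by linarith
    simp only [e, abs_neg, abs_of_pos hq0, hq0.ne', ← hr, hn]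
    obtain ⟨h1, h2⟩ := aux_pos z hzi
    rcases aux_zero w hwi with ⟨h, h'⟩ | ⟨h, h'⟩ <;> rw [h', Set.mem_Ioc]
    · exact iff_of_true (fun h => by linarith [h.2]) (by simp [h, hq0.ne'])
    · exact iff_of_false (fun h => h ⟨by linarith, by linarith⟩) (by simp [h, hq0.ne'])
  · rw [aux_pp z w hzi hwi, him]
    have hq : |q| < a := by
      rw [abs_lt]; constructor <;> linarith
    have hq0 := abs_nonneg q
    have ha : 0 < a := by linarith
    have h1 : |a| > |q| := by rw [abs_of_pos ha]; linarith
    have h2 : (p * a + b * q) / 2 < 0 ↔ p < -(b * q / a) := by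
      rw [← neg_div, lt_div_iff₀ ha]
      constructor <;> intro h <;> linarith
    have hn : ¬ a < -|q| := by linarith
    rw [h2]
    simp [h1, hn, ha.ne']
end

section
/- For every complex number p, ∫₀^{π} exp(p·cos x)·cos(p·sin x) dx = π, and ∫₀^{2π} exp(p·cos x)·cos(p·sin x) dx = 2π. -/
open scoped Real

theorem gr_aux_E (p : ℂ) :
    (∫ x : ℝ in (0:ℝ)..(2 * π), Complex.exp (p * Complex.exp (x * Complex.I))) = 2 * (π : ℂ) := by
  have h : DiffContOnCl ℂ (fun z : ℂ => Complex.exp (p * z)) (Metric.ball 0 |(1:ℝ)|) := by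
    apply Differentiable.diffContOnCl
    fun_prop
  have h2 := h.circleAverage
  rw [Real.circleAverage_def] at h2
  simp only [circleMap, mul_zero, Complex.exp_zero, zero_add, Complex.ofReal_one, one_mul,
    Complex.real_smul] at h2
  have hpi : (π : ℂ) ≠ 0 := by exact_mod_cast Real.pi_ne_zero
  push_cast at h2
  field_simp at h2
  linear_combination h2

theorem gr_3931_4_generalized (p : ℂ) :
    (∫ x : ℝ in (0:ℝ)..π,
        Complex.exp (p * Complex.cos x) * Complex.cos (p * Complex.sin x)) = (π : ℂ) ∧
    (∫ x : ℝ in (0:ℝ)..(2 * π),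
        Complex.exp (p * Complex.cos x) * Complex.cos (p * Complex.sin x)) = 2 * (π : ℂ) := by
  set F : ℝ → ℂ := fun x => Complex.exp (p * Complex.cos x) * Complex.cos (p * Complex.sin x)
    with hF
  set G : ℝ → ℂ := fun x => Complex.exp (p * Complex.exp (x * Complex.I)) with hG
  have hFc : Continuous F := by fun_prop
  have hGc : Continuous G := by fun_prop
  have hcos : ∀ x : ℝ, Complex.cos ((2 * π - x : ℝ) : ℂ) = Complex.cos x := by
    intro x
    rw [← Complex.ofReal_cos, Real.cos_two_pi_sub, Complex.ofReal_cos]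
  have hsin : ∀ x : ℝ, Complex.sin ((2 * π - x : ℝ) : ℂ) = - Complex.sin x := by
    intro x
    rw [← Complex.ofReal_sin, Real.sin_two_pi_sub, Complex.ofReal_neg, Complex.ofReal_sin]
  have hFG : ∀ x : ℝ, F x = (1 / 2 : ℂ) * (G x + G (2 * π - x)) := by
    intro x
    simp only [hF, hG]
    rw [Complex.exp_mul_I, Complex.exp_mul_I, hcos, hsin]
    rw [Complex.cos.eq_1 (p * _), mul_add p, mul_add p, Complex.exp_add, Complex.exp_add]
    rw [show p * (-Complex.sin x * Complex.I) = -(p * Complex.sin x) * Complex.I by ring,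
      mul_assoc p]
    ring_nf
  have hFs : ∀ x : ℝ, F (2 * π - x) = F x := by
    intro x
    simp only [hF]
    rw [hcos, hsin, mul_neg, Complex.cos_neg]
  have hGr : ∫ x : ℝ in (0:ℝ)..(2 * π), G (2 * π - x) = ∫ x : ℝ in (0:ℝ)..(2 * π), G x := by
    rw [intervalIntegral.integral_comp_sub_left G]
    simp
  have hGE : ∫ x : ℝ in (0:ℝ)..(2 * π), G x = 2 * (π : ℂ) := gr_aux_E p
  have h2 : ∫ x : ℝ in (0:ℝ)..(2 * π), F x = 2 * (π : ℂ) := by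
    simp_rw [hFG]
    rw [intervalIntegral.integral_const_mul, intervalIntegral.integral_add
      (hGc.intervalIntegrable _ _)
      (Continuous.intervalIntegrable (by fun_prop) _ _), hGr, hGE]
    ring
  refine ⟨?_, h2⟩
  have h3 : ∫ x : ℝ in (0:ℝ)..π, F (2 * π - x) = ∫ x : ℝ in π..(2 * π), F x := by
    rw [intervalIntegral.integral_comp_sub_left F]
    congr 1 <;> ring
  simp_rw [hFs] at h3
  have h4 := intervalIntegral.integral_add_adjacent_intervals
    (hFc.intervalIntegrable (μ := MeasureTheory.volume) 0 π) (hFc.intervalIntegrable π (2 * π))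
  rw [← h3, h2] at h4
  linear_combination (1 / 2 : ℂ) * h4
end

section
/- For every complex number p and every natural number m with m ≥ 1, ∫₀^{π} exp(p·cos x)·sin(p·sin x)·sin(m·x) dx = π·p^m/(2·m!). -/
open scoped Real

lemma aux_cos (k : ℤ) (hk : k ≠ 0) : ∫ x : ℝ in (0:ℝ)..π, Real.cos (k * x) = 0 := by
  have hk' : (k : ℝ) ≠ 0 := by exact_mod_cast hk
  rw [intervalIntegral.integral_comp_mul_left (fun x => Real.cos x) hk']
  simp [Real.sin_int_mul_pi]

lemma aux_sin_s12 (n m : ℕ) (hm : 1 ≤ m) :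
    ∫ x : ℝ in (0:ℝ)..π, Real.sin (n * x) * Real.sin (m * x) = if n = m then π / 2 else 0 := by
  have h : ∀ x : ℝ, Real.sin (n * x) * Real.sin (m * x) =
      (Real.cos (((n - m : ℤ) : ℝ) * x) - Real.cos (((n + m : ℤ) : ℝ) * x)) / 2 := by
    intro x
    push_cast
    rw [sub_mul, add_mul, Real.cos_sub, Real.cos_add]
    ring
  simp_rw [h]
  rw [intervalIntegral.integral_div, intervalIntegral.integral_sub
    (Continuous.intervalIntegrable (by fun_prop) _ _)
    (Continuous.intervalIntegrable (by fun_prop) _ _), aux_cos (n + m) (by omega)]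
  split_ifs with hnm
  · subst hnm
    simp
  · rw [aux_cos (n - m) (by omega)]
    simp

lemma aux_sum_s12 (p : ℂ) (x : ℝ) :
    HasSum (fun n : ℕ => p ^ n / (n.factorial : ℂ) * (Real.sin (n * x) : ℂ))
      (Complex.exp (p * Complex.cos x) * Complex.sin (p * Complex.sin x)) := by
  have e : ∀ z : ℂ, HasSum (fun n : ℕ => z ^ n / (n.factorial : ℂ)) (Complex.exp z) := by
    intro z
    rw [Complex.exp_eq_exp_ℂ]
    exact NormedSpace.expSeries_div_hasSum_exp z
  have h := ((e (p * Complex.exp (-x * Complex.I))).sub (e (p * Complex.exp (x * Complex.I)))).mul_right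
    (Complex.I / 2)
  convert h using 1
  · rfl
  · funext n
    rw [mul_pow, mul_pow, ← Complex.exp_nat_mul, ← Complex.exp_nat_mul]
    push_cast
    rw [Complex.sin]
    rw [show (n : ℂ) * (-x * Complex.I) = -(n * x) * Complex.I by ring,
      show (n : ℂ) * (x * Complex.I) = (n * x) * Complex.I by ring]
    ring
  · rw [Complex.exp_mul_I (-(x : ℂ)), Complex.exp_mul_I (x : ℂ), Complex.cos_neg,
      Complex.sin_neg, mul_add, mul_add, Complex.exp_add, Complex.exp_add]
    rw [show p * (-Complex.sin x * Complex.I) = -(p * Complex.sin x) * Complex.I by ring,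
      show p * (Complex.sin x * Complex.I) = (p * Complex.sin x) * Complex.I by ring]
    rw [Complex.sin.eq_1 (p * _)]
    ring

theorem gr_3932_1 (p : ℂ) (m : ℕ) (hm : 1 ≤ m) :
    (∫ x : ℝ in (0:ℝ)..π,
        Complex.exp (p * Complex.cos x) * Complex.sin (p * Complex.sin x) *
          (Real.sin (m * x) : ℂ)) =
      (π : ℂ) * p ^ m / (2 * (m.factorial : ℂ)) := by
  have key := intervalIntegral.hasSum_integral_of_dominated_convergence
    (μ := MeasureTheory.volume) (a := 0) (b := π)
    (F := fun (n : ℕ) (x : ℝ) => p ^ n / (n.factorial : ℂ) * (Real.sin (n * x) : ℂ) *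
      (Real.sin (m * x) : ℂ))
    (f := fun x : ℝ => Complex.exp (p * Complex.cos x) * Complex.sin (p * Complex.sin x) *
          (Real.sin (m * x) : ℂ))
    (fun n _ => ‖p‖ ^ n / (n.factorial : ℝ))
    (fun n => Continuous.aestronglyMeasurable (by fun_prop))
    (fun n => Filter.Eventually.of_forall (fun x _ => by
      rw [norm_mul, norm_mul, norm_div, norm_pow, Complex.norm_natCast, Complex.norm_real,
        Complex.norm_real, Real.norm_eq_abs, Real.norm_eq_abs, mul_assoc]
      exact mul_le_of_le_one_right (by positivity)
        (mul_le_one₀ (Real.abs_sin_le_one _) (abs_nonneg _) (Real.abs_sin_le_one _))))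
    (Filter.Eventually.of_forall (fun x _ => Real.summable_pow_div_factorial _))
    (by simp)
    (Filter.Eventually.of_forall (fun x _ => (aux_sum_s12 p x).mul_right _))
  have h2 : ∀ n : ℕ, (∫ x : ℝ in (0:ℝ)..π, p ^ n / (n.factorial : ℂ) * (Real.sin (n * x) : ℂ) *
      (Real.sin (m * x) : ℂ)) =
      if n = m then (π : ℂ) * p ^ m / (2 * (m.factorial : ℂ)) else 0 := by
    intro n
    simp_rw [mul_assoc, ← Complex.ofReal_mul]
    rw [intervalIntegral.integral_const_mul, intervalIntegral.integral_ofReal, aux_sin_s12 n m hm]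
    split_ifs with h
    · subst h
      push_cast
      field_simp
    · simp
  simp_rw [h2] at key
  exact key.unique (hasSum_ite_eq m _)
end

section
/- For every complex number p and every natural number m, ∫₀^{2π} exp(p·cos x)·cos(p·sin x − m·x) dx = 2π·p^m/m!. -/
open scoped Real

lemma aux_3936 (p : ℂ) (m : ℕ) (s : ℂ) (hs : s = Complex.I ∨ s = -Complex.I) :
    (∫ x : ℝ in (0:ℝ)..(2 * π), Complex.exp (p * Complex.exp (s * x) - m * (s * x))) =
      2 * (π : ℂ) * p ^ m / (m.factorial : ℂ) := by
  have hs0 : s ≠ 0 := by rcases hs with rfl | rfl <;> simp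
  have hsr : s.re = 0 := by rcases hs with rfl | rfl <;> simp
  have hper : ∀ k : ℤ, Complex.exp (k * s * (2 * π)) = 1 := by
    intro k
    rw [Complex.exp_eq_one_iff]
    rcases hs with rfl | rfl
    · exact ⟨k, by ring⟩
    · exact ⟨-k, by push_cast; ring⟩
  have hnorm : ∀ x : ℝ, ‖Complex.exp (s * x)‖ = 1 := by
    intro x; rw [Complex.norm_exp]; simp [hsr]
  have h := intervalIntegral.hasSum_integral_of_dominated_convergence
    (μ := MeasureTheory.volume) (a := 0) (b := 2 * π)
    (F := fun (n : ℕ) (x : ℝ) => p ^ n / (n.factorial : ℂ) * Complex.exp ((((n : ℤ) - (m : ℤ) : ℤ) : ℂ) * s * x))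
    (f := fun x : ℝ => Complex.exp (p * Complex.exp (s * x) - m * (s * x)))
    (fun n _ => ‖p‖ ^ n / (n.factorial : ℝ))
    (fun n => by
      apply Continuous.aestronglyMeasurable
      fun_prop)
    (fun n => Filter.Eventually.of_forall fun x _ => by
      rw [norm_mul, Complex.norm_exp]
      simp [hsr])
    (Filter.Eventually.of_forall fun x _ => Real.summable_pow_div_factorial _)
    (by simp)
    (Filter.Eventually.of_forall fun x _ => by
      have h1 := (NormedSpace.expSeries_div_hasSum_exp (p * Complex.exp (s * x))).mul_right
        (Complex.exp (-(m * (s * x))))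
      rw [← Complex.exp_eq_exp_ℂ, ← Complex.exp_add, ← sub_eq_add_neg] at h1
      refine Eq.mp (congrArg (fun g : ℕ → ℂ => HasSum g _) (funext fun n => Eq.symm ?_)) h1
      rw [mul_pow, ← Complex.exp_nat_mul, mul_div_right_comm, mul_assoc (p ^ n / _), ← Complex.exp_add]
      congr 2
      push_cast
      ring)
  refine h.unique ?_
  refine Eq.mp (congrArg (fun g : ℕ → ℂ => HasSum g _) (funext fun n => Eq.symm ?_))
    (hasSum_ite_eq m (2 * (π : ℂ) * p ^ m / (m.factorial : ℂ)))
  rw [intervalIntegral.integral_const_mul]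
  split_ifs with hn
  · subst hn
    simp
    ring
  · have hc : (((n : ℤ) - (m : ℤ) : ℤ) : ℂ) * s ≠ 0 :=
      mul_ne_zero (by rw [Int.cast_ne_zero]; omega) hs0
    rw [integral_exp_mul_complex hc]
    have := hper ((n : ℤ) - (m : ℤ))
    rw [Complex.ofReal_mul, Complex.ofReal_ofNat, this]
    simp

theorem gr_3936_1 (p : ℂ) (m : ℕ) :
    (∫ x : ℝ in (0:ℝ)..(2 * π),
        Complex.exp (p * Complex.cos x) * Complex.cos (p * Complex.sin x - m * x)) =
      2 * (π : ℂ) * p ^ m / (m.factorial : ℂ) := by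
  have h1 := aux_3936 p m Complex.I (Or.inl rfl)
  have h2 := aux_3936 p m (-Complex.I) (Or.inr rfl)
  have key : ∀ x : ℝ, Complex.exp (p * Complex.cos x) * Complex.cos (p * Complex.sin x - m * x)
      = (Complex.exp (p * Complex.exp (Complex.I * x) - m * (Complex.I * x))
        + Complex.exp (p * Complex.exp (-Complex.I * x) - m * (-Complex.I * x))) / 2 := by
    intro x
    have e1 : Complex.exp (Complex.I * x) = Complex.cos x + Complex.sin x * Complex.I := by
      rw [mul_comm, Complex.exp_mul_I]
    have e2 : Complex.exp (-Complex.I * x) = Complex.cos x - Complex.sin x * Complex.I := by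
      rw [show -Complex.I * (x : ℂ) = (-(x : ℂ)) * Complex.I by ring, Complex.exp_mul_I,
        Complex.cos_neg, Complex.sin_neg]
      ring
    rw [e1, e2, Complex.cos.eq_1 (p * Complex.sin x - m * x), mul_div_assoc', mul_add,
      ← Complex.exp_add, ← Complex.exp_add]
    congr 3 <;> ring
  simp_rw [key]
  rw [intervalIntegral.integral_div, intervalIntegral.integral_add, h1, h2]
  · ring
  · apply Continuous.intervalIntegrable
    fun_prop
  · apply Continuous.intervalIntegrable
    fun_prop
end

section
/- For every complex number p and every natural number m, ∫₀^{2π} exp(p·cos x)·sin(p·sin x + m·x) dx = 0 and ∫₀^{2π} exp(p·cos x)·sin(p·sin x − m·x) dx = 0. -/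
open scoped Real

theorem odd_reflect_integral (f : ℝ → ℂ) (h : ∀ x, f (2 * π - x) = - f x) :
    (∫ x : ℝ in (0:ℝ)..(2 * π), f x) = 0 := by
  have h1 := intervalIntegral.integral_comp_sub_left (a := 0) (b := 2 * π) f (2 * π)
  simp only [h, intervalIntegral.integral_neg, sub_self, sub_zero] at h1
  exact self_eq_neg.mp h1.symm

theorem gr_3936_4_generalized (p : ℂ) (m : ℕ) :
    (∫ x : ℝ in (0:ℝ)..(2 * π),
        Complex.exp (p * Complex.cos x) * Complex.sin (p * Complex.sin x + m * x)) = 0 ∧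
    (∫ x : ℝ in (0:ℝ)..(2 * π),
        Complex.exp (p * Complex.cos x) * Complex.sin (p * Complex.sin x - m * x)) = 0 := by
  constructor
  · apply odd_reflect_integral
    intro x
    push_cast
    rw [Complex.cos_two_pi_sub, Complex.sin_two_pi_sub, ← mul_neg, ← Complex.sin_neg (p * _ + _),
      ← Complex.sin_add_nat_mul_two_pi (-(p * Complex.sin x + m * x)) m]
    congr 2
    ring
  · apply odd_reflect_integral
    intro x
    push_cast
    rw [Complex.cos_two_pi_sub, Complex.sin_two_pi_sub, ← mul_neg, ← Complex.sin_neg (p * _ - _),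
      ← Complex.sin_sub_nat_mul_two_pi (-(p * Complex.sin x - m * x)) m]
    congr 2
    ring
end

section
/- For all real numbers p, q and every natural number m, ∫₀^{2π} exp(p·cos x + q·sin x)·sin(q·cos x − p·sin x + m·x) dx = (2π/m!)·(√(p² + q²))^m·sin(m·arg(p + i·q)). (This corrects Gradshteyn–Ryzhik Eq. 3.937 3, whose stated answer with atan(q/p) has the wrong sign when m is odd and p < 0.) -/
open scoped Real

lemma aux_complex (b : ℂ) (m : ℕ) :
    (∫ x : ℝ in (0:ℝ)..(2 * π), Complex.exp (b * Complex.exp (x * Complex.I) - m * x * Complex.I))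
      = 2 * π / (m.factorial : ℂ) * b ^ m := by
  have h := DifferentiableOn.circleIntegral_one_div_sub_center_pow_smul (R := 1) (c := 0)
    (f := fun z => Complex.exp (b * z)) one_pos m
    (by fun_prop)
  rw [iteratedDeriv_cexp_const_mul] at h
  simp only [circleIntegral, deriv_circleMap, circleMap_zero, smul_eq_mul, sub_zero,
    Complex.ofReal_one, one_mul, mul_zero, Complex.exp_zero, mul_one] at h
  have h2 : ∀ x : ℝ, Complex.exp (x * Complex.I) * Complex.I *
      (1 / Complex.exp (x * Complex.I) ^ (m + 1) * Complex.exp (b * Complex.exp (x * Complex.I)))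
      = Complex.I *
        Complex.exp (b * Complex.exp (x * Complex.I) - m * x * Complex.I) := by
    intro x
    rw [Complex.exp_sub, mul_assoc (m : ℂ), Complex.exp_nat_mul, pow_succ]
    have := Complex.exp_ne_zero (x * Complex.I)
    field_simp
  simp only [h2] at h
  rw [intervalIntegral.integral_const_mul] at h
  apply mul_left_cancel₀ Complex.I_ne_zero
  rw [h]; ring

theorem gr_3937_3_corrected (p q : ℝ) (m : ℕ) :
    (∫ x : ℝ in (0:ℝ)..(2 * π),
        Real.exp (p * Real.cos x + q * Real.sin x) *
          Real.sin (q * Real.cos x - p * Real.sin x + m * x)) =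
      2 * π / (m.factorial : ℝ) * (Real.sqrt (p ^ 2 + q ^ 2)) ^ m *
        Real.sin (m * Complex.arg (p + Complex.I * q)) := by
  have h := aux_complex (p - Complex.I * q) m
  have him := congrArg Complex.imCLM h
  rw [← ContinuousLinearMap.intervalIntegral_comp_comm _
    (Continuous.intervalIntegrable (by fun_prop) _ _)] at him
  simp only [Complex.imCLM_apply] at him
  have h1 : ∀ x : ℝ, (Complex.exp ((p - Complex.I * q) * Complex.exp (x * Complex.I)
      - m * x * Complex.I)).im = -(Real.exp (p * Real.cos x + q * Real.sin x) *
          Real.sin (q * Real.cos x - p * Real.sin x + m * x)) := by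
    intro x
    have : ((p - Complex.I * q) * Complex.exp (x * Complex.I) - m * x * Complex.I : ℂ)
      = ((p * Real.cos x + q * Real.sin x : ℝ) : ℂ) +
        ((-(q * Real.cos x - p * Real.sin x + m * x) : ℝ) : ℂ) * Complex.I := by
      rw [Complex.exp_mul_I]
      push_cast
      linear_combination (-q * Complex.sin x) * Complex.I_sq
    rw [this, Complex.exp_im]
    simp only [Complex.add_re, Complex.add_im, Complex.ofReal_re, Complex.ofReal_im,
      Complex.re_ofReal_mul, Complex.im_ofReal_mul, Complex.I_re, Complex.I_im, mul_zero, mul_one,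
      add_zero, zero_add, Real.sin_neg, mul_neg]
  simp only [h1] at him
  rw [intervalIntegral.integral_neg] at him
  have hn : ‖(p + Complex.I * q : ℂ)‖ = Real.sqrt (p ^ 2 + q ^ 2) := by
    rw [mul_comm, Complex.norm_add_mul_I]
  have hb : (p - Complex.I * q : ℂ) = (starRingEnd ℂ) (p + Complex.I * q) := by
    simp [sub_eq_add_neg]
  have ha := Complex.norm_mul_exp_arg_mul_I (p + Complex.I * q : ℂ)
  have h3 : ((p + Complex.I * q : ℂ) ^ m).im = (Real.sqrt (p ^ 2 + q ^ 2)) ^ m *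
        Real.sin (m * Complex.arg (p + Complex.I * q)) := by
    rw [hn] at ha
    generalize Complex.arg (p + Complex.I * q) = t at *
    rw [← ha, mul_pow, ← Complex.exp_nat_mul, ← Complex.ofReal_pow, Complex.im_ofReal_mul,
      ← mul_assoc, ← Complex.ofReal_natCast, ← Complex.ofReal_mul, Complex.exp_ofReal_mul_I_im]
  have h4 : (2 * π / (m.factorial : ℂ)) = ((2 * π / (m.factorial : ℝ) : ℝ) : ℂ) := by
    push_cast; rfl
  rw [h4, Complex.im_ofReal_mul, hb, ← map_pow, Complex.conj_im, h3] at him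
  linarith
end
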